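/- arXiv:0709.4238 — 2 statements merged into one kernel-verified Lean document; each statement's English description precedes it below -/
import Mathlib

section
/- (Parametrized Sard theorem.) Let X ⊆ ℝ^L and Y ⊆ ℝ^M be open sets, and let f : X × Y → ℝ^N be of class C^r with r > max{0, L - N}. Suppose 0 ∈ ℝ^N is a regular value of f, i.e. at every point (x, y) ∈ X × Y with f(x, y) = 0 the total derivative Df(x, y) : ℝ^{L+M} → ℝ^N is surjective. Then for Lebesgue-almost every y ∈ Y, 0 is a regular value of the map x ↦ f(x, y), i.e. at every x ∈ X with f(x, y) = 0 the partial derivative D_x f(x, y) : ℝ^L → ℝ^N is surjective. -/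
open MeasureTheory Function

/-!
The zero set of `F (x, y) = f x y` is a `C^r` manifold of dimension `L + M - N`, and `0` fails to be
a regular value of `f · y` exactly when `y` is a critical value of the projection of this manifold
to `ℝ^M`. So the statement is the Morse-Sard theorem with the sharp order of differentiability.

*Reduction to rank zero* (`exists_nhds_volume_snd_image_eq_zero`). Near a zero `z₀` where `D_x F` has
rank `p < N`, split `ℝ^L = X₁ ⊕ X₂` with `X₂ = ker D_x F(z₀)`, and `ℝ^M = Y₁ ⊕ Y₂` with `Y₁` of
dimension `N - p` mapped by `D_y F(z₀)` isomorphically onto a complement of the range of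
`D_x F(z₀)`. The implicit function theorem parametrizes the zeros by `X₂ × Y₂`; let `η(x₂, y₂)` be
the `Y₁`-component of the parametrization. At the zeros near `z₀` where `D_x F` still has rank `p`,
the derivative of `η` in `x₂` vanishes. By Fubini it then suffices that for each `y₂` the set of
critical values of rank zero of `η(·, y₂) : ℝ^{L - p} → ℝ^{N - p}` is null. The order of
differentiability suffices because `r ≥ L - N + 1` gives `L - p ≤ r (N - p)`.

*Rank zero* (`volume_image_eq_zero_of_fderiv_eq_zero`). Let `g` be of class `C^{k+1}` with `Dg = 0` on
`A`. A. P. Morse's decomposition (`outerMeasure_eq_zero_of_flatPieces`) covers `A` by countably many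
images `ψ(S)`, with `ψ` of class `C^1` on a space of at most the same dimension, such that *every*
`C^k` function vanishing on `A` is `o(|y - x|^k)` along `ψ` at each `x ∈ S`. Applied to `Dg` this
gives `g(ψ y) - g(ψ x) = o(|y - x|^{k+1})`, and a covering argument
(`volume_image_eq_zero_of_isLittleO`) shows that `g(ψ(S))` is null.
The decomposition is proved by induction on `k` and the dimension: either all `C^k` functions
vanishing on `A` have zero derivative at a point, and then their derivatives are handled by the case
`k - 1`; or one of them has a nonzero derivative, and `A` is locally contained in a `C^k`
hypersurface, where the dimension drops. Working with an arbitrary outer measure in place of a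
countable cover lets `measure_null_of_locally_null` do the bookkeeping.
-/

section
open Set Filter Topology Asymptotics Module
open scoped NNReal ENNReal

/-! ### Implicit function theorem -/

/-- The zero set of a `C^k` function `f` near `z₀`, parametrized by a linear map `T` whose restriction
to the kernel of the derivative is an isomorphism. -/
theorem exists_local_parametrization {V W G : Type} [NormedAddCommGroup V] [NormedSpace ℝ V]
    [FiniteDimensional ℝ V] [NormedAddCommGroup W] [NormedSpace ℝ W] [FiniteDimensional ℝ W]
    [NormedAddCommGroup G] [NormedSpace ℝ G] [FiniteDimensional ℝ G]
    {k : ℕ} (hk : k ≠ 0) {f : V → W} {z₀ : V} (hf : ContDiffAt ℝ k f z₀) (hf0 : f z₀ = 0)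
    (T : V →L[ℝ] G) (hdim : finrank ℝ V = finrank ℝ W + finrank ℝ G)
    (hinj : ∀ v, fderiv ℝ f z₀ v = 0 → T v = 0 → v = 0) :
    ∃ Ψ : G → V, ContDiffAt ℝ k Ψ (T z₀) ∧ Ψ (T z₀) = z₀ ∧
      (∀ᶠ z in 𝓝 z₀, f z = 0 → Ψ (T z) = z) ∧
      (∀ᶠ w in 𝓝 (T z₀), f (Ψ w) = 0 ∧ T (Ψ w) = w) ∧
      ∀ᶠ z in 𝓝 z₀, ∀ v, fderiv ℝ f z v = 0 → T v = 0 → v = 0 := by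
  have hk' : (k : WithTop ℕ∞) ≠ 0 := by exact_mod_cast hk
  let D : V →L[ℝ] W × G := (fderiv ℝ f z₀).prod T
  have hD : Injective D := by
    rw [injective_iff_map_eq_zero]
    intro v hv
    have := Prod.ext_iff.1 hv
    exact hinj v this.1 this.2
  let e : V ≃L[ℝ] W × G :=
    (LinearEquiv.ofInjectiveOfFinrankEq (D : V →ₗ[ℝ] W × G) hD
      (by rw [hdim, Module.finrank_prod])).toContinuousLinearEquiv
  let Φ : V → W × G := fun z => (f z, T z)
  have hΦ : ContDiffAt ℝ k Φ z₀ := hf.prodMk T.contDiff.contDiffAt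
  have hΦ' : HasFDerivAt Φ (e : V →L[ℝ] W × G) z₀ := by
    have h1 : HasFDerivAt Φ D z₀ :=
      ((hf.differentiableAt hk').hasFDerivAt).prodMk T.hasFDerivAt
    exact h1.congr_fderiv (ContinuousLinearMap.ext fun v => rfl)
  have hs := hΦ.hasStrictFDerivAt' hΦ' hk'
  have hpt : Φ z₀ = (0, T z₀) := by simp [Φ, hf0]
  have hin : Tendsto (fun w : G => ((0 : W), w)) (𝓝 (T z₀)) (𝓝 (Φ z₀)) := by
    rw [hpt]
    exact (Continuous.prodMk_right (0 : W)).tendsto _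
  refine ⟨fun w => hΦ.localInverse hΦ' hk' (0, w), ?_, ?_, ?_, ?_, ?_⟩
  · have := hΦ.to_localInverse hΦ' hk'
    rw [hpt] at this
    exact this.comp (T z₀) (contDiff_prodMk_right (0 : W)).contDiffAt
  · have := hΦ.localInverse_apply_image hΦ' hk'
    rwa [hpt] at this
  · filter_upwards [hs.eventually_left_inverse] with z hz h0
    have h1 : Φ z = (0, T z) := by simp [Φ, h0]
    rw [h1] at hz
    exact hz
  · filter_upwards [hin.eventually hs.eventually_right_inverse] with w hw
    exact Prod.ext_iff.1 hw
  · -- invertible operators form an open set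
    have hc : ContinuousAt (fun z => (fderiv ℝ f z).prod T) z₀ := by
      have h1 : ContinuousAt (fderiv ℝ f) z₀ :=
        (hf.fderiv_right (m := 0) (by
          rw [zero_add]; exact_mod_cast Nat.one_le_iff_ne_zero.2 hk)).continuousAt
      exact (ContinuousLinearMap.prodₗᵢ ℝ : _ ≃ₗᵢ[ℝ] (V →L[ℝ] W × G)).continuous.continuousAt.comp
        (h1.prodMk continuousAt_const)
    have heD : (fderiv ℝ f z₀).prod T = (e : V →L[ℝ] W × G) :=
      ContinuousLinearMap.ext fun v => rfl
    have hn := ContinuousLinearEquiv.nhds e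
    rw [← heD] at hn
    filter_upwards [hc.eventually hn] with z hz v hv hTv
    obtain ⟨e', he'⟩ := hz
    refine e'.injective ?_
    rw [map_zero]
    calc e' v = (fderiv ℝ f z).prod T v := DFunLike.congr_fun he' v
      _ = 0 := Prod.ext hv hTv

/-! ### Maps with small oscillation -/

/-- If `h y - h x = o(‖y - x‖ ^ r)` at the points of `S` and the dimension of the source is at most
`r * m`, then `h '' S` is null: on a suitable part of `S` the map is locally Hölder of exponent `r`
with an arbitrarily small constant, so the `m`-dimensional measure of the image is controlled by the
`r * m`-dimensional Hausdorff measure of the source. -/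
theorem volume_image_eq_zero_of_isLittleO {E : Type} [NormedAddCommGroup E] [NormedSpace ℝ E]
    [FiniteDimensional ℝ E] {m r : ℕ} (hm : 0 < m) (hr : 0 < r) (hd : finrank ℝ E ≤ r * m)
    {h : E → Fin m → ℝ} {S : Set E}
    (ho : ∀ x ∈ S, (fun y => h y - h x) =o[𝓝 x] fun y => ‖y - x‖ ^ r) :
    volume (h '' S) = 0 := by
  borelize E
  -- it suffices to treat bounded sets, on which the relevant Hausdorff measure is finite
  suffices H : ∀ x₀ : E, volume (h '' (S ∩ Metric.closedBall x₀ 1)) = 0 by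
    refine measure_null_of_locally_null (μ := OuterMeasure.comap h volume.toOuterMeasure) S ?_
    intro x _
    exact ⟨S ∩ Metric.closedBall x 1, inter_mem_nhdsWithin _ (Metric.closedBall_mem_nhds x one_pos),
      H x⟩
  intro x₀
  set K := Metric.closedBall x₀ (1 : ℝ)
  set ν : Measure E := μH[(r : ℝ) * m]
  have hνK : ν K < ∞ := by
    refine lt_of_le_of_lt (Measure.hausdorffMeasure_mono (d₁ := (finrank ℝ E : ℝ)) ?_ K) ?_
    · exact_mod_cast hd
    · exact (isCompact_closedBall x₀ 1).measure_lt_top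
  have key : ∀ ε : ℝ≥0, ε ≤ 1 → 0 < ε → volume (h '' (S ∩ K)) ≤ ε * ν K := by
    intro ε hε1 hε
    let δ : ℕ → ℝ := fun j => 1 / ((j : ℝ) + 1)
    have hδ : ∀ j, 0 < δ j := fun j => Nat.one_div_pos_of_nat
    -- the points where the `o(‖y - x‖ ^ r)` estimate holds with constant `ε` at scale `δ j`
    let T : ℕ → Set E := fun j =>
      {x ∈ S ∩ K | ∀ y, dist y x < δ j → ‖h y - h x‖ ≤ ε * ‖y - x‖ ^ r}
    have hTmono : Monotone T := by
      intro i j hij x hx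
      exact ⟨hx.1, fun y hy => hx.2 y (hy.trans_le (Nat.one_div_le_one_div hij))⟩
    have hTun : S ∩ K = ⋃ j, T j := by
      refine Subset.antisymm (fun x hx => ?_) (iUnion_subset fun j x hx => hx.1)
      have h1 := (isLittleO_iff.1 (ho x hx.1)) (show (0 : ℝ) < ε from hε)
      obtain ⟨ρ, hρ, hball⟩ := Metric.eventually_nhds_iff.1 h1
      obtain ⟨j, hj⟩ := exists_nat_one_div_lt hρ
      refine mem_iUnion.2 ⟨j, hx, fun y hy => ?_⟩
      have := hball (hy.trans hj)
      rwa [norm_pow, norm_norm] at this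
    -- cut the space into measurable pieces of diameter less than `δ j`
    have hT : ∀ j, volume (h '' T j) ≤ ε * ν K := by
      intro j
      let P : ℕ → Set E := disjointed fun i => Metric.ball (TopologicalSpace.denseSeq E i) (δ j / 2)
      have hPm : ∀ i, MeasurableSet (P i ∩ K) := fun i =>
        (MeasurableSet.disjointed (fun _ => Metric.isOpen_ball.measurableSet) i).inter
          Metric.isClosed_closedBall.measurableSet
      have hPd : Pairwise (Disjoint on fun i => P i ∩ K) := fun i i' hne =>
        (disjoint_disjointed _ hne).mono inter_subset_left inter_subset_left
      have hPu : ⋃ i, P i = univ := by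
        rw [iUnion_disjointed, eq_univ_iff_forall]
        intro x
        obtain ⟨i, hi⟩ := (TopologicalSpace.denseRange_denseSeq E).exists_dist_lt x
          (half_pos (hδ j))
        exact mem_iUnion.2 ⟨i, hi⟩
      have hpiece : ∀ i, volume (h '' (T j ∩ P i)) ≤ ε * ν (P i ∩ K) := by
        intro i
        have hH : HolderOnWith ε r h (T j ∩ P i) := by
          intro x hx y hy
          have hxy : dist x y < δ j := by
            have hx' := disjointed_subset _ _ hx.2
            have hy' := disjointed_subset _ _ hy.2
            rw [Metric.mem_ball] at hx' hy'
            linarith [dist_triangle_right x y (TopologicalSpace.denseSeq E i)]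
          have := hy.1.2 x hxy
          rw [edist_eq_enorm_sub, edist_eq_enorm_sub]
          simp only [NNReal.coe_natCast, ENNReal.rpow_natCast]
          have h2 : ‖h x - h y‖₊ ≤ ε * ‖x - y‖₊ ^ r := by exact_mod_cast this
          simp only [enorm]
          exact_mod_cast h2
        have h1 := hH.hausdorffMeasure_image_le (by exact_mod_cast hr) (d := m) (by positivity)
        have h3 : (μH[(m : ℝ)] : Measure (Fin m → ℝ)) = volume := by
          simpa using hausdorffMeasure_pi_real (ι := Fin m)
        rw [h3] at h1
        refine h1.trans (mul_le_mul' ?_ (measure_mono ?_))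
        · rw [ENNReal.rpow_natCast]
          exact_mod_cast pow_le_of_le_one (zero_le) hε1 hm.ne'
        · exact fun x hx => ⟨hx.2, hx.1.1.2⟩
      calc volume (h '' T j) = volume (⋃ i, h '' (T j ∩ P i)) := by
            rw [← image_iUnion, ← inter_iUnion, hPu, inter_univ]
        _ ≤ ∑' i, volume (h '' (T j ∩ P i)) := measure_iUnion_le _
        _ ≤ ∑' i, ε * ν (P i ∩ K) := ENNReal.tsum_le_tsum hpiece
        _ = ε * ν (⋃ i, P i ∩ K) := by rw [ENNReal.tsum_mul_left, measure_iUnion hPd hPm]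
        _ ≤ ε * ν K := by gcongr; exact iUnion_subset fun i => inter_subset_right
    rw [hTun, image_iUnion, Monotone.measure_iUnion (fun i j hij => image_mono (hTmono hij))]
    exact iSup_le hT
  have hlim : Tendsto (fun n : ℕ => ((n : ℝ≥0∞) + 1)⁻¹ * ν K) atTop (𝓝 0) := by
    have h0 : Tendsto (fun n : ℕ => ((n : ℝ≥0∞) + 1)⁻¹) atTop (𝓝 0) := by
      have := (tendsto_add_atTop_iff_nat 1).2 ENNReal.tendsto_inv_nat_nhds_zero
      simpa using this
    simpa using ENNReal.Tendsto.mul_const h0 (Or.inr hνK.ne)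
  refine le_antisymm (ge_of_tendsto' hlim fun n => ?_) zero_le
  have := key ((n : ℝ≥0) + 1)⁻¹ (inv_le_one_of_one_le₀ (by simp)) (by positivity)
  rwa [ENNReal.coe_inv (by positivity), ENNReal.coe_add, ENNReal.coe_natCast,
    ENNReal.coe_one] at this
/-! ### The Morse decomposition -/

/-- A `C^1` parametrized piece `ψ '' S` of `A` along which every function of class `C^k` at the
points of `A` that vanishes on `A` is flat to order `k`. The test functions take values in all
normed spaces, which allows passing to derivatives. -/
structure IsFlatPiece (k : ℕ) {E E' : Type} [NormedAddCommGroup E] [NormedSpace ℝ E]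
    [NormedAddCommGroup E'] [NormedSpace ℝ E'] (A : Set E) (ψ : E' → E) (S : Set E') : Prop where
  mapsTo : MapsTo ψ S A
  contDiffAt : ∀ x ∈ S, ContDiffAt ℝ 1 ψ x
  flat : ∀ (F : Type) [NormedAddCommGroup F] [NormedSpace ℝ F] (g : E → F),
    (∀ a ∈ A, ContDiffAt ℝ k g a) → (∀ a ∈ A, g a = 0) →
      ∀ x ∈ S, (fun y => g (ψ y)) =o[𝓝 x] fun y => ‖y - x‖ ^ k

theorem isLittleO_comp_sub_of_fderiv {E E' F : Type} [NormedAddCommGroup E] [NormedSpace ℝ E]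
    [NormedAddCommGroup E'] [NormedSpace ℝ E'] [NormedAddCommGroup F] [NormedSpace ℝ F]
    {k : ℕ} {g : E → F} {ψ : E' → E} {x : E'} (hψ : ContDiffAt ℝ 1 ψ x)
    (hg : ContDiffAt ℝ 1 g (ψ x))
    (h : (fun y => fderiv ℝ g (ψ y)) =o[𝓝 x] fun y => ‖y - x‖ ^ k) :
    (fun y => g (ψ y) - g (ψ x)) =o[𝓝 x] fun y => ‖y - x‖ ^ (k + 1) := by
  have hd : ∀ᶠ y in 𝓝 x, HasFDerivAt (fun y => g (ψ y))
      ((fderiv ℝ g (ψ y)).comp (fderiv ℝ ψ y)) y := by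
    filter_upwards [hψ.eventually (by simp),
      hψ.continuousAt.eventually (hg.eventually (by simp))] with y h1 h2
    exact (h2.differentiableAt one_ne_zero).hasFDerivAt.comp y
      (h1.differentiableAt one_ne_zero).hasFDerivAt
  have hO : (fun y => fderiv ℝ ψ y) =O[𝓝 x] fun _ => (1 : ℝ) :=
    (hψ.fderiv_right (m := 0) (by simp)).continuousAt.isBigO_one ℝ
  have ho : (fun y => (fderiv ℝ g (ψ y)).comp (fderiv ℝ ψ y)) =o[𝓝 x]
      fun y => ‖y - x‖ ^ k := by
    have h1 : (fun y => (fderiv ℝ g (ψ y)).comp (fderiv ℝ ψ y)) =O[𝓝 x]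
        fun y => ‖fderiv ℝ g (ψ y)‖ * ‖fderiv ℝ ψ y‖ :=
      IsBigO.of_bound 1 (Eventually.of_forall fun y => by
        simpa using ContinuousLinearMap.opNorm_comp_le _ _)
    simpa using h1.trans_isLittleO (h.norm_left.mul_isBigO hO.norm_left)
  obtain ⟨ρ, hρ, hball⟩ := Metric.eventually_nhds_iff_ball.1 hd
  have hnhds : 𝓝[Metric.ball x ρ] x = 𝓝 x :=
    nhdsWithin_eq_nhds.2 (Metric.ball_mem_nhds x hρ)
  have := (convex_ball x ρ).isLittleO_pow_succ (n := k) (Metric.mem_ball_self hρ)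
    (fun y hy => (hball y hy).hasFDerivWithinAt) (by rwa [hnhds])
  rwa [hnhds] at this

/-- A. P. Morse's decomposition, stated for an outer measure: if `μ` vanishes on all flat pieces of
`A` of dimension at most that of the ambient space, it vanishes on `A`. -/
theorem outerMeasure_eq_zero_of_flatPieces (k : ℕ) : ∀ (n : ℕ) (E : Type) [NormedAddCommGroup E]
    [NormedSpace ℝ E] [FiniteDimensional ℝ E] (_ : finrank ℝ E = n) (μ : OuterMeasure E)
    (A : Set E)
    (_ : ∀ (E' : Type) [NormedAddCommGroup E'] [NormedSpace ℝ E'] [FiniteDimensional ℝ E']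
      (ψ : E' → E) (S : Set E'), finrank ℝ E' ≤ n → IsFlatPiece k A ψ S → μ (ψ '' S) = 0),
    μ A = 0 := by
  induction k with
  | zero =>
    intro n E _ _ _ hn μ A H
    have := H E id A hn.le ⟨mapsTo_id A, fun x _ => contDiffAt_id, ?_⟩
    · simpa using this
    · intro F _ _ g hg hg0 x hx
      simp only [pow_zero, id]
      rw [isLittleO_one_iff, ← hg0 x hx]
      exact (hg x hx).continuousAt
  | succ k ihk =>
    intro n
    induction n using Nat.strong_induction_on with
    | _ n ihn =>
    intro E _ _ _ hn μ A H
    -- the points of `A` where no admissible function cuts out a hypersurface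
    let A' : Set E := {x ∈ A | ∀ (F : Type) [NormedAddCommGroup F] [NormedSpace ℝ F] (g : E → F),
      (∀ a ∈ A, ContDiffAt ℝ (k + 1 : ℕ) g a) → (∀ a ∈ A, g a = 0) → fderiv ℝ g x = 0}
    have hA' : μ A' = 0 := by
      refine ihk n E hn μ A' fun E' _ _ _ ψ S hE' hS => H E' ψ S hE' ⟨?_, hS.contDiffAt, ?_⟩
      · exact fun x hx => (hS.mapsTo hx).1
      · intro F _ _ g hg hg0 x hx
        have hxA := hS.mapsTo hx
        have h1 := hS.flat (E →L[ℝ] F) (fderiv ℝ g)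
          (fun a ha => (hg a ha.1).fderiv_right (by push_cast; exact le_rfl))
          (fun a ha => ha.2 F g hg hg0) x hx
        have h2 := isLittleO_comp_sub_of_fderiv (hS.contDiffAt x hx)
          ((hg _ hxA.1).of_le (by push_cast; exact le_add_self)) h1
        simpa [hg0 _ hxA.1] using h2
    -- near the other points, `A` lies in a hypersurface parametrized by the kernel of a linear form
    have hA'' : μ (A \ A') = 0 := by
      refine measure_null_of_locally_null _ ?_
      rintro x ⟨hxA, hxA'⟩
      have : ∃ f : E → ℝ, (∀ a ∈ A, ContDiffAt ℝ (k + 1 : ℕ) f a) ∧ (∀ a ∈ A, f a = 0) ∧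
          fderiv ℝ f x ≠ 0 := by
        have hx' : ¬ ∀ (F : Type) [NormedAddCommGroup F] [NormedSpace ℝ F] (g : E → F),
            (∀ a ∈ A, ContDiffAt ℝ (k + 1 : ℕ) g a) → (∀ a ∈ A, g a = 0) → fderiv ℝ g x = 0 :=
          fun h => hxA' ⟨hxA, h⟩
        push Not at hx'
        obtain ⟨F, _, _, g, hg, hg0, hgx⟩ := hx'
        obtain ⟨v, hv⟩ : ∃ v, fderiv ℝ g x v ≠ 0 := by
          by_contra! hcon
          exact hgx (ContinuousLinearMap.ext hcon)
        obtain ⟨l, -, hl⟩ := exists_dual_vector ℝ _ (norm_ne_zero_iff.2 hv)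
        refine ⟨fun y => l (g y), fun a ha => l.contDiff.contDiffAt.comp a (hg a ha),
          fun a ha => by simp [hg0 a ha], fun h0 => ?_⟩
        have h1 : HasFDerivAt (fun y => l (g y)) (l.comp (fderiv ℝ g x)) x :=
          l.hasFDerivAt.comp x
            (((hg x hxA).differentiableAt (by exact_mod_cast k.succ_ne_zero)).hasFDerivAt)
        rw [h1.fderiv] at h0
        have h2 : l (fderiv ℝ g x v) = 0 := DFunLike.congr_fun h0 v
        rw [hl] at h2
        simp [hv] at h2
      obtain ⟨f, hf, hf0, hfx⟩ := this
      let L : E →ₗ[ℝ] ℝ := (fderiv ℝ f x : E →ₗ[ℝ] ℝ)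
      have hL : L ≠ 0 := fun h => hfx (ContinuousLinearMap.ext fun v => DFunLike.congr_fun h v)
      obtain ⟨T₀, hT₀⟩ := L.ker.subtype.exists_leftInverse_of_injective L.ker.ker_subtype
      let T : E →L[ℝ] L.ker := T₀.toContinuousLinearMap
      have hdim : finrank ℝ E = finrank ℝ ℝ + finrank ℝ L.ker := by
        rw [← L.finrank_range_add_finrank_ker, LinearMap.range_eq_top.2 (L.surjective hL),
          finrank_top]
      obtain ⟨Ψ, hΨ, -, hΨT, -, -⟩ := exists_local_parametrization k.succ_ne_zero (hf x hxA)
        (hf0 x hxA) T hdim (fun v hv hTv => by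
          have h1 : T₀ (L.ker.subtype ⟨v, hv⟩) = ⟨v, hv⟩ := DFunLike.congr_fun hT₀ _
          have h2 : T₀ v = 0 := hTv
          rw [Submodule.subtype_apply, h2] at h1
          exact (congrArg Subtype.val h1).symm)
      have hC : ∀ᶠ z in 𝓝 x, ContDiffAt ℝ (k + 1 : ℕ) Ψ (T z) :=
        T.continuous.continuousAt.eventually (hΨ.eventually (by simp))
      let B : Set E := {z | (f z = 0 → Ψ (T z) = z) ∧ ContDiffAt ℝ (k + 1 : ℕ) Ψ (T z)}
      have hB : B ∈ 𝓝 x := hΨT.and hC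
      refine ⟨(A \ A') ∩ B, inter_mem_nhdsWithin _ hB, ?_⟩
      refine measure_mono_null (t := Ψ '' (T '' (A ∩ B))) ?_ ?_
      · rintro z ⟨⟨hzA, -⟩, hzB⟩
        exact ⟨T z, ⟨z, ⟨hzA, hzB⟩, rfl⟩, hzB.1 (hf0 z hzA)⟩
      have hmap : MapsTo Ψ (T '' (A ∩ B)) A := by
        rintro _ ⟨z, ⟨hzA, hzB⟩, rfl⟩
        rw [hzB.1 (hf0 z hzA)]
        exact hzA
      have hCS : ∀ w ∈ T '' (A ∩ B), ContDiffAt ℝ (k + 1 : ℕ) Ψ w := by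
        rintro _ ⟨z, ⟨-, hzB⟩, rfl⟩
        exact hzB.2
      have hlt : finrank ℝ L.ker < n := by
        rw [← hn, hdim, finrank_self]; omega
      refine ihn _ hlt L.ker rfl (OuterMeasure.comap Ψ μ) (T '' (A ∩ B)) ?_
      intro E' _ _ _ ψ S hE' hS
      rw [OuterMeasure.comap_apply, ← image_comp]
      refine H E' (Ψ ∘ ψ) S (hE'.trans hlt.le) ⟨hmap.comp hS.mapsTo, fun y hy => ?_, ?_⟩
      · exact ((hCS _ (hS.mapsTo hy)).of_le (by push_cast; exact le_add_self)).comp y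
          (hS.contDiffAt y hy)
      · intro F _ _ g hg hg0 y hy
        exact hS.flat F (g ∘ Ψ) (fun w hw => (hg _ (hmap hw)).comp w (hCS w hw))
          (fun w hw => hg0 _ (hmap hw)) y hy
    rw [← union_sdiff_cancel (s := A') (t := A) fun x hx => hx.1]
    exact measure_union_null hA' hA''

/-- The rank zero case of the Morse-Sard theorem. -/
theorem volume_image_eq_zero_of_fderiv_eq_zero {E : Type} [NormedAddCommGroup E]
    [NormedSpace ℝ E] [FiniteDimensional ℝ E] {m r : ℕ} (hm : 0 < m) (hr : 0 < r)
    (hd : finrank ℝ E ≤ r * m) {f : E → Fin m → ℝ} {A : Set E}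
    (hf : ∀ a ∈ A, ContDiffAt ℝ r f a) (hf' : ∀ a ∈ A, fderiv ℝ f a = 0) :
    volume (f '' A) = 0 := by
  obtain ⟨k, rfl⟩ := Nat.exists_eq_succ_of_ne_zero hr.ne'
  refine outerMeasure_eq_zero_of_flatPieces k _ E rfl
    (OuterMeasure.comap f volume.toOuterMeasure) A fun E' _ _ _ ψ S hE' hS => ?_
  rw [OuterMeasure.comap_apply, ← image_comp]
  refine volume_image_eq_zero_of_isLittleO hm hr (hE'.trans hd) fun x hx => ?_
  exact isLittleO_comp_sub_of_fderiv (g := f) (ψ := ψ) (hS.contDiffAt x hx)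
    ((hf _ (hS.mapsTo hx)).of_le (by push_cast; exact le_add_self))
    (hS.flat _ (fderiv ℝ f) (fun a ha => (hf a ha).fderiv_right (by push_cast; exact le_rfl))
      hf' x hx)

/-! ### Reduction to rank zero -/

/-- The rank zero case with parameters: for each value of the second variable the critical values
of `η` in the first variable form a null set, hence by Fubini so does their union over the
parameters. A compact neighborhood is used to have a measurable set. -/
theorem exists_nhds_volume_image_eq_zero {G : Type} [NormedAddCommGroup G] [NormedSpace ℝ G]
    [FiniteDimensional ℝ G] {s q r : ℕ} (hq : 0 < q) (hr : 0 < r) (hd : finrank ℝ G ≤ r * q)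
    {η : G × (Fin s → ℝ) → Fin q → ℝ} {w₀ : G × (Fin s → ℝ)} (hη : ContDiffAt ℝ r η w₀) :
    ∃ W ∈ 𝓝 w₀, volume ((fun w => (w.2, η w)) ''
      {w ∈ W | (fderiv ℝ η w).comp (ContinuousLinearMap.inl ℝ G (Fin s → ℝ)) = 0}) = 0 := by
  obtain ⟨W, hW, hWη, hWc⟩ := local_compact_nhds (hη.eventually (by simp))
  replace hWη : ∀ w ∈ W, ContDiffAt ℝ r η w := fun w hw => hWη hw
  refine ⟨W, hW, ?_⟩
  set C : Set (G × (Fin s → ℝ)) :=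
    {w ∈ W | (fderiv ℝ η w).comp (ContinuousLinearMap.inl ℝ G (Fin s → ℝ)) = 0}
  have hr' : (r : WithTop ℕ∞) ≠ 0 := by exact_mod_cast hr.ne'
  have hcη : ContinuousOn η W := fun w hw => (hWη _ hw).continuousAt.continuousWithinAt
  have hcD : ContinuousOn
      (fun w => (fderiv ℝ η w).comp (ContinuousLinearMap.inl ℝ G (Fin s → ℝ))) W := by
    intro w hw
    have h1 : ContinuousAt (fderiv ℝ η) w :=
      ((hWη _ hw).fderiv_right (m := 0) (by rw [zero_add]; exact_mod_cast hr)).continuousAt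
    exact (h1.clm_comp continuousAt_const).continuousWithinAt
  have hC : IsCompact C :=
    hWc.of_isClosed_subset (hcD.preimage_isClosed_of_isClosed hWc.isClosed isClosed_singleton)
      (fun w hw => hw.1)
  have himg : IsCompact ((fun w : G × (Fin s → ℝ) => (w.2, η w)) '' C) :=
    hC.image_of_continuousOn (continuous_snd.continuousOn.prodMk (hcη.mono fun w hw => hw.1))
  rw [Measure.volume_eq_prod, Measure.measure_prod_null himg.measurableSet]
  refine Eventually.of_forall fun y => ?_
  have hslice : Prod.mk y ⁻¹' ((fun w : G × (Fin s → ℝ) => (w.2, η w)) '' C) =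
      (fun x => η (x, y)) '' {x | (x, y) ∈ C} := by
    ext t
    constructor
    · rintro ⟨⟨x, y'⟩, hxy, he⟩
      obtain ⟨rfl, rfl⟩ := Prod.ext_iff.1 he
      exact ⟨x, hxy, rfl⟩
    · rintro ⟨x, hx, rfl⟩
      exact ⟨(x, y), hx, rfl⟩
  beta_reduce
  rw [Pi.zero_apply, hslice]
  refine volume_image_eq_zero_of_fderiv_eq_zero hq hr hd (fun x hx => ?_) (fun x hx => ?_)
  · exact (hWη _ hx.1).comp x (contDiff_prodMk_left y).contDiffAt
  · have h1 : HasFDerivAt (fun x => η (x, y))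
        ((fderiv ℝ η (x, y)).comp (ContinuousLinearMap.inl ℝ G (Fin s → ℝ))) x :=
      HasFDerivAt.comp (g := η) (f := fun x' => (x', y)) x
        ((hWη _ hx.1).differentiableAt hr').hasFDerivAt (hasFDerivAt_prodMk_left x y)
    rw [h1.fderiv]
    exact hx.2

/-- Coordinates on `V` whose second component factors through a given surjection `c`. -/
theorem exists_equiv_of_surjective {V Q : Type} [NormedAddCommGroup V] [NormedSpace ℝ V]
    [FiniteDimensional ℝ V] [AddCommGroup Q] [Module ℝ Q] [FiniteDimensional ℝ Q] (c : V →ₗ[ℝ] Q)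
    (hc : Surjective c) {s q : ℕ} (hq : finrank ℝ Q = q) (hs : finrank ℝ V = q + s) :
    ∃ e : V ≃L[ℝ] (Fin s → ℝ) × (Fin q → ℝ), ∀ b, c b = 0 → (e b).2 = 0 := by
  have hker : finrank ℝ c.ker = s := by
    have := c.finrank_range_add_finrank_ker
    rw [LinearMap.range_eq_top.2 hc, finrank_top] at this
    omega
  obtain ⟨π, hπ⟩ := c.ker.subtype.exists_leftInverse_of_injective c.ker.ker_subtype
  let i₁ : c.ker ≃ₗ[ℝ] (Fin s → ℝ) := LinearEquiv.ofFinrankEq _ _ (by simp [hker])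
  let i₂ : Q ≃ₗ[ℝ] (Fin q → ℝ) := LinearEquiv.ofFinrankEq _ _ (by simp [hq])
  let D : V →ₗ[ℝ] (Fin s → ℝ) × (Fin q → ℝ) :=
    ((i₁ : c.ker →ₗ[ℝ] (Fin s → ℝ)).comp π).prod ((i₂ : Q →ₗ[ℝ] (Fin q → ℝ)).comp c)
  have hD : Injective D := by
    rw [injective_iff_map_eq_zero]
    intro v hv
    obtain ⟨h1, h2⟩ := Prod.ext_iff.1 hv
    have h2' : c v = 0 := i₂.map_eq_zero_iff.1 h2
    have h1' : π v = 0 := i₁.map_eq_zero_iff.1 h1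
    have h3 : π (c.ker.subtype ⟨v, h2'⟩) = ⟨v, h2'⟩ := DFunLike.congr_fun hπ _
    rw [Submodule.subtype_apply, h1'] at h3
    exact (congrArg Subtype.val h3).symm
  refine ⟨(LinearEquiv.ofInjectiveOfFinrankEq D hD
    (by simp [hs, add_comm])).toContinuousLinearEquiv, fun b hb => ?_⟩
  exact i₂.map_eq_zero_iff.2 hb

/-- The rank of the derivative of `F` in the first variable, that is, of the restriction of the total
derivative to the first factor. -/
noncomputable def partialRank {L M N : ℕ} (F : (Fin L → ℝ) × (Fin M → ℝ) → Fin N → ℝ)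
    (z : (Fin L → ℝ) × (Fin M → ℝ)) : ℕ :=
  finrank ℝ (LinearMap.range ((fderiv ℝ F z : (Fin L → ℝ) × (Fin M → ℝ) →ₗ[ℝ] (Fin N → ℝ)) ∘ₗ
    LinearMap.inl ℝ (Fin L → ℝ) (Fin M → ℝ)))

/-- Near a zero where the partial derivative has rank `p < N`, the zeros with the same rank project
to a null set of parameters. -/
theorem exists_nhds_volume_snd_image_eq_zero {L M N r : ℕ} (hr : L - N < r)
    {F : (Fin L → ℝ) × (Fin M → ℝ) → Fin N → ℝ} {z₀ : (Fin L → ℝ) × (Fin M → ℝ)}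
    (hF : ContDiffAt ℝ r F z₀) (hF0 : F z₀ = 0) (hsurj : Surjective (fderiv ℝ F z₀))
    (hp : partialRank F z₀ < N) :
    ∃ U ∈ 𝓝 z₀, volume (Prod.snd '' {z ∈ U | F z = 0 ∧ partialRank F z = partialRank F z₀}) = 0 := by
  have hr0 : 0 < r := by omega
  have hr' : (r : WithTop ℕ∞) ≠ 0 := by exact_mod_cast hr0.ne'
  set p := partialRank F z₀ with hpdef
  let A : (Fin L → ℝ) →ₗ[ℝ] (Fin N → ℝ) :=
    (fderiv ℝ F z₀ : (Fin L → ℝ) × (Fin M → ℝ) →ₗ[ℝ] (Fin N → ℝ)) ∘ₗ LinearMap.inl ℝ _ _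
  let B : (Fin M → ℝ) →ₗ[ℝ] (Fin N → ℝ) :=
    (fderiv ℝ F z₀ : (Fin L → ℝ) × (Fin M → ℝ) →ₗ[ℝ] (Fin N → ℝ)) ∘ₗ LinearMap.inr ℝ _ _
  have hAB : ∀ a b, fderiv ℝ F z₀ (a, b) = A a + B b := fun a b => by
    simp only [A, B, LinearMap.comp_apply, LinearMap.inl_apply, LinearMap.inr_apply,
      ContinuousLinearMap.coe_coe]
    rw [← map_add]; simp
  have hrA : finrank ℝ A.range = p := rfl
  have hkA : p + finrank ℝ A.ker = L := by
    have := A.finrank_range_add_finrank_ker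
    rwa [hrA, finrank_fin_fun] at this
  let c : (Fin M → ℝ) →ₗ[ℝ] (Fin N → ℝ) ⧸ A.range := A.range.mkQ ∘ₗ B
  have hc : Surjective c := by
    intro t
    obtain ⟨u, rfl⟩ := A.range.mkQ_surjective t
    obtain ⟨⟨a, b⟩, rfl⟩ := hsurj u
    refine ⟨b, ?_⟩
    have h0 : A.range.mkQ (A a) = 0 :=
      (Submodule.Quotient.mk_eq_zero _).2 (LinearMap.mem_range_self A a)
    rw [hAB, map_add, h0, zero_add]
    rfl
  have hq : finrank ℝ ((Fin N → ℝ) ⧸ A.range) = N - p := by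
    have := A.range.finrank_quotient_add_finrank
    rw [finrank_fin_fun] at this
    omega
  have hqM : N - p ≤ M := by
    have := LinearMap.finrank_le_finrank_of_surjective hc
    rwa [hq, finrank_fin_fun] at this
  obtain ⟨s, hs⟩ : ∃ s, M = N - p + s := ⟨M - (N - p), by omega⟩
  obtain ⟨e, he⟩ := exists_equiv_of_surjective c hc hq (s := s) (by rw [finrank_fin_fun, hs])
  obtain ⟨π, hπ⟩ := A.ker.subtype.exists_leftInverse_of_injective A.ker.ker_subtype
  have hπ' : ∀ a, A a = 0 → π a = 0 → a = 0 := by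
    intro a ha hπa
    have h3 : π (A.ker.subtype ⟨a, ha⟩) = ⟨a, ha⟩ := DFunLike.congr_fun hπ _
    rw [Submodule.subtype_apply, hπa] at h3
    exact (congrArg Subtype.val h3).symm
  have hkπ : finrank ℝ π.ker = p := by
    have h1 := π.finrank_range_add_finrank_ker
    have h2 : π.range = ⊤ :=
      LinearMap.range_eq_top.2 fun t => ⟨A.ker.subtype t, DFunLike.congr_fun hπ t⟩
    rw [h2, finrank_top, finrank_fin_fun] at h1
    omega
  let T : (Fin L → ℝ) × (Fin M → ℝ) →L[ℝ] A.ker × (Fin s → ℝ) :=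
    (π.toContinuousLinearMap.comp (ContinuousLinearMap.fst ℝ _ _)).prod
      ((ContinuousLinearMap.fst ℝ _ _).comp
        ((e : (Fin M → ℝ) →L[ℝ] (Fin s → ℝ) × (Fin (N - p) → ℝ)).comp (ContinuousLinearMap.snd ℝ _ _)))
  have hT : ∀ a b, T (a, b) = (π a, (e b).1) := fun a b => rfl
  obtain ⟨Ψ, hΨ, -, hΨT, hFΨ, hinj⟩ := exists_local_parametrization hr0.ne' hF hF0 T
    (by simp only [finrank_prod, finrank_fin_fun]; omega)
    (by
      rintro ⟨a, b⟩ h1 h2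
      rw [hAB] at h1
      obtain ⟨h3, h4⟩ := Prod.ext_iff.1 h2
      have hb : b = 0 := by
        refine e.map_eq_zero_iff.1 (Prod.ext h4 (he b ?_))
        refine (Submodule.Quotient.mk_eq_zero _).2 ⟨-a, ?_⟩
        rw [map_neg]
        exact neg_eq_of_add_eq_zero_right h1
      subst hb
      rw [map_zero, add_zero] at h1
      rw [hπ' a h1 h3]
      rfl)
  let η : A.ker × (Fin s → ℝ) → Fin (N - p) → ℝ := fun w => (e (Ψ w).2).2
  let E₂ : (Fin L → ℝ) × (Fin M → ℝ) →L[ℝ] (Fin (N - p) → ℝ) :=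
    (ContinuousLinearMap.snd ℝ _ _).comp
      ((e : (Fin M → ℝ) →L[ℝ] (Fin s → ℝ) × (Fin (N - p) → ℝ)).comp (ContinuousLinearMap.snd ℝ _ _))
  have hη : ContDiffAt ℝ r η (T z₀) := E₂.contDiff.contDiffAt.comp (T z₀) hΨ
  -- `L - p ≤ r (N - p)`: put `b + 1 = N - p` and `a + 1 = r`, so that `L - p ≤ a + b + 1`
  have hdim : finrank ℝ A.ker ≤ r * (N - p) := by
    obtain ⟨b, hb⟩ : ∃ b, N - p = b + 1 := ⟨N - p - 1, by omega⟩
    obtain ⟨a, ha⟩ : ∃ a, r = a + 1 := ⟨r - 1, by omega⟩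
    rw [hb, ha]
    have : finrank ℝ A.ker ≤ a + (b + 1) := by omega
    nlinarith [Nat.zero_le (a * b)]
  obtain ⟨W, hW, hWnull⟩ := exists_nhds_volume_image_eq_zero (by omega) hr0 hdim hη
  have hTc : Tendsto T (𝓝 z₀) (𝓝 (T z₀)) := T.continuous.tendsto z₀
  refine ⟨_, hΨT.and ((hTc.eventually hW).and ((hTc.eventually hFΨ.eventually_nhds).and
    ((hTc.eventually (hΨ.eventually (by simp))).and ((hF.eventually (by simp)).and hinj)))), ?_⟩
  have hnull : volume (e ⁻¹' ((fun w : A.ker × (Fin s → ℝ) => (w.2, η w)) ''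
      {w ∈ W | (fderiv ℝ η w).comp (ContinuousLinearMap.inl ℝ A.ker (Fin s → ℝ)) = 0})) = 0 := by
    have hac : Measure.map e volume ≪ volume := by
      have : Measure.IsAddHaarMeasure (Measure.map e (volume : Measure (Fin M → ℝ))) :=
        e.isAddHaarMeasure_map _
      have : (volume : Measure ((Fin s → ℝ) × (Fin (N - p) → ℝ))).IsAddHaarMeasure := by
        exact Measure.prod.instIsAddHaarMeasure volume volume
      exact Measure.absolutelyContinuous_isAddHaarMeasure _ _
    exact le_antisymm ((Measure.le_map_apply e.continuous.aemeasurable _).trans_eq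
      (hac hWnull)) zero_le
  refine measure_mono_null ?_ hnull
  rintro _ ⟨z, ⟨⟨hz1, hz2, hz3, hz4, hz5, hz6⟩, hz0, hzp⟩, rfl⟩
  have hΨz : Ψ (T z) = z := hz1 hz0
  have hTΨ : T (Ψ (T z)) = T z := hz3.self_of_nhds.2
  refine ⟨T z, ⟨hz2, ?_⟩, ?_⟩
  swap
  · change ((e z.2).1, (e (Ψ (T z)).2).2) = e z.2
    rw [hΨz]
  have hΨd : HasFDerivAt Ψ (fderiv ℝ Ψ (T z)) (T z) := (hz4.differentiableAt hr').hasFDerivAt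
  have hFd : HasFDerivAt F (fderiv ℝ F z) (Ψ (T z)) := by
    rw [hΨz]; exact (hz5.differentiableAt hr').hasFDerivAt
  have hFΨd : (fderiv ℝ F z).comp (fderiv ℝ Ψ (T z)) = 0 :=
    (hFd.comp _ hΨd).unique ((hasFDerivAt_const (0 : Fin N → ℝ) (T z)).congr_of_eventuallyEq
      (hz3.mono fun w hw => hw.1))
  have hTΨd : T.comp (fderiv ℝ Ψ (T z)) = ContinuousLinearMap.id ℝ _ :=
    (T.hasFDerivAt.comp _ hΨd).unique ((hasFDerivAt_id (T z)).congr_of_eventuallyEq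
      (hz3.mono fun w hw => hw.2))
  have hηd : HasFDerivAt η (E₂.comp (fderiv ℝ Ψ (T z))) (T z) := E₂.hasFDerivAt.comp _ hΨd
  rw [hηd.fderiv]
  -- differentiating `F ∘ Ψ = 0` and `T ∘ Ψ = id` in the direction `(u, 0)`
  ext1 u
  obtain ⟨⟨a, b⟩, hab⟩ : ∃ ab, ab = fderiv ℝ Ψ (T z) (u, 0) := ⟨_, rfl⟩
  have h1 : fderiv ℝ F z (a, b) = 0 := by rw [hab]; exact DFunLike.congr_fun hFΨd (u, 0)
  have h2 : T (a, b) = (u, 0) := by rw [hab]; exact DFunLike.congr_fun hTΨd (u, 0)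
  change E₂ (fderiv ℝ Ψ (T z) (u, 0)) = 0
  rw [← hab]
  change (e b).2 = 0
  suffices hb : b = 0 by rw [hb, map_zero]; rfl
  let Az : (Fin L → ℝ) →ₗ[ℝ] (Fin N → ℝ) :=
    (fderiv ℝ F z : (Fin L → ℝ) × (Fin M → ℝ) →ₗ[ℝ] (Fin N → ℝ)) ∘ₗ LinearMap.inl ℝ _ _
  -- `Az` is injective on `ker π`, of dimension `p`, and has rank `p`, so `ker π` already attains the
  -- whole range
  have hmap : π.ker.map Az = Az.range := by
    refine Submodule.eq_of_le_of_finrank_eq LinearMap.map_le_range ?_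
    have hAzinj : Injective (Az ∘ₗ π.ker.subtype) := by
      rw [injective_iff_map_eq_zero]
      rintro ⟨a', ha'⟩ h
      have := hz6 (a', 0) h (by rw [hT, LinearMap.mem_ker.1 ha', map_zero]; rfl)
      exact Subtype.ext (congrArg Prod.fst this)
    have := LinearMap.finrank_range_of_inj hAzinj
    rw [LinearMap.range_comp, Submodule.range_subtype, hkπ] at this
    rw [this]
    exact hzp.symm
  obtain ⟨a', ha', haa'⟩ : Az a ∈ π.ker.map Az := hmap ▸ LinearMap.mem_range_self Az a
  have h3 : fderiv ℝ F z (a', b) = 0 := by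
    have e1 : ((a', b) : (Fin L → ℝ) × (Fin M → ℝ)) = (a, b) + ((a', 0) - (a, 0)) := by simp
    have e2 : fderiv ℝ F z (a', 0) = fderiv ℝ F z (a, 0) := haa'
    rw [e1, map_add, map_sub, h1, e2, sub_self, zero_add]
  have h4 : T (a', b) = 0 := by
    rw [hT, LinearMap.mem_ker.1 ha']
    have h5 : (e b).1 = 0 := congrArg Prod.snd h2
    rw [h5]
    rfl
  exact congrArg Prod.snd (hz6 _ h3 h4)
end

/-- Parametrized Sard theorem: let `X ⊆ ℝ^L`, `Y ⊆ ℝ^M` be open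
and `f : X × Y → ℝ^N` be `C^r` with `r > max{0, L - N}` (which, with truncated
natural subtraction, reads `L - N < r`). If `0` is a regular value of `f` (the total
derivative is surjective at every zero of `f` in `X × Y`), then for Lebesgue-almost
every `y ∈ Y`, `0` is a regular value of `x ↦ f(x, y)` on `X`: at every `x ∈ X` with
`f(x, y) = 0`, the derivative in the `x`-variables is surjective. -/
theorem parametrized_sard (L M N : ℕ) (r : ℕ) (hr : L - N < r)
    (X : Set (Fin L → ℝ)) (Y : Set (Fin M → ℝ)) (hX : IsOpen X) (hY : IsOpen Y)
    (f : (Fin L → ℝ) → (Fin M → ℝ) → (Fin N → ℝ))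
    (hf : ContDiffOn ℝ r (fun p : (Fin L → ℝ) × (Fin M → ℝ) => f p.1 p.2) (X ×ˢ Y))
    (hreg : ∀ p ∈ X ×ˢ Y, f p.1 p.2 = 0 →
      Surjective (fderiv ℝ (fun q : (Fin L → ℝ) × (Fin M → ℝ) => f q.1 q.2) p)) :
    ∀ᵐ y ∂(volume : Measure (Fin M → ℝ)), y ∈ Y →
      ∀ x ∈ X, f x y = 0 → Surjective (fderiv ℝ (fun x' => f x' y) x) := by
  set F : (Fin L → ℝ) × (Fin M → ℝ) → (Fin N → ℝ) := fun p => f p.1 p.2 with hFdef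
  have hF : ∀ z ∈ X ×ˢ Y, ContDiffAt ℝ r F z := fun z hz =>
    hf.contDiffAt ((hX.prod hY).mem_nhds hz)
  -- stratify the zeros with non-surjective partial derivative by rank
  let bad : ℕ → Set ((Fin L → ℝ) × (Fin M → ℝ)) := fun p =>
    {z ∈ X ×ˢ Y | F z = 0 ∧ p < N ∧ partialRank F z = p}
  have hbad : ∀ p, volume (Prod.snd '' bad p) = 0 := by
    intro p
    refine measure_null_of_locally_null
      (μ := OuterMeasure.comap Prod.snd (volume : Measure (Fin M → ℝ)).toOuterMeasure)
      (bad p) ?_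
    rintro z₀ ⟨hz, hz0, hp, rfl⟩
    obtain ⟨U, hU, hUnull⟩ :=
      exists_nhds_volume_snd_image_eq_zero hr (hF z₀ hz) hz0 (hreg z₀ hz hz0) hp
    refine ⟨bad (partialRank F z₀) ∩ U, inter_mem_nhdsWithin _ hU, ?_⟩
    refine measure_mono_null (μ := volume) (Set.image_mono ?_) hUnull
    rintro z ⟨⟨-, h0, -, hpz⟩, hzU⟩
    exact ⟨hzU, h0, hpz⟩
  refine measure_mono_null ?_ (measure_iUnion_null hbad)
  intro y hy
  simp only [Set.mem_compl_iff, Set.mem_ofPred_eq, not_forall] at hy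
  obtain ⟨hyY, x, hxX, hxy, hns⟩ := hy
  refine Set.mem_iUnion.2 ⟨partialRank F (x, y), (x, y), ⟨⟨hxX, hyY⟩, hxy, ?_, rfl⟩, rfl⟩
  have hr' : (r : WithTop ℕ∞) ≠ 0 := by exact_mod_cast (by omega : r ≠ 0)
  have h1 : HasFDerivAt (fun x' => f x' y)
      ((fderiv ℝ F (x, y)).comp (ContinuousLinearMap.inl ℝ (Fin L → ℝ) (Fin M → ℝ))) x :=
    HasFDerivAt.comp (g := F) (f := fun x' => (x', y)) x
      ((hF (x, y) ⟨hxX, hyY⟩).differentiableAt hr').hasFDerivAt (hasFDerivAt_prodMk_left x y)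
  rw [h1.fderiv] at hns
  by_contra! hge
  refine hns (LinearMap.range_eq_top.1 (Submodule.eq_top_of_finrank_eq
    (le_antisymm (Submodule.finrank_le _) ?_)))
  rw [Module.finrank_fin_fun]
  exact hge
end

section
/- Let X ⊆ ℝ^L and Y ⊆ ℝ^M be open sets, and let f : X × Y → ℝ^N be of class C^r with r > max{0, L - N} and L < N. If 0 ∈ ℝ^N is a regular value of f (the total derivative Df(x, y) is surjective at every zero of f), then for Lebesgue-almost every y ∈ Y the set {x ∈ X : f(x, y) = 0} is empty. -/
/-!
At a zero where the derivative is onto, the implicit function theorem writes the zero set of a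
`C^1` map locally as a Lipschitz image of a subset of the kernel of the derivative. Here this kernel
has dimension `L + M - N < M`, so the zero set has Hausdorff dimension less than `M` near each
of its points. Projecting to `ℝ^M` does not increase the dimension and `ℝ^L × ℝ^M` is Lindelöf,
so the projection of the zero set is null for the `M`-dimensional Hausdorff measure, which is
Lebesgue measure. The parameters with a nonempty fibre are exactly the points of this projection.
-/

open MeasureTheory Function
open Set Filter Topology Module

/-- A regular level set of a strictly differentiable map has, near each of its points `a`, Hausdorff
dimension at most the dimension of the kernel of the derivative at `a`. -/
lemma exists_nhds_dimH_level_le {E F : Type*} [NormedAddCommGroup E] [NormedSpace ℝ E]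
    [FiniteDimensional ℝ E] [NormedAddCommGroup F] [NormedSpace ℝ F] [FiniteDimensional ℝ F]
    {g : E → F} {g' : E →L[ℝ] F} {a : E} (hg : HasStrictFDerivAt g g' a) (hs : g'.range = ⊤) :
    ∃ U ∈ 𝓝 a, dimH (U ∩ {x | g x = g a}) ≤ finrank ℝ g'.ker := by
  have := FiniteDimensional.complete ℝ E
  obtain ⟨K, s, hs0, hK⟩ := (hg.to_implicitFunction hs).exists_lipschitzOnWith
  set e := hg.implicitToOpenPartialHomeomorph g g' hs
  have hcont : Tendsto (fun x => (e x).2) (𝓝 a) (𝓝 0) := by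
    have h1 := e.continuousAt (hg.mem_implicitToOpenPartialHomeomorph_source hs)
    have h2 := h1.snd
    rwa [ContinuousAt, hg.implicitToOpenPartialHomeomorph_self hs] at h2
  refine ⟨_, inter_mem (hg.eq_implicitFunction hs) (hcont hs0), ?_⟩
  calc dimH _ ≤ dimH (hg.implicitFunction g g' hs (g a) '' s) := by
        refine dimH_mono ?_
        rintro x ⟨⟨h1, h2⟩, h3⟩
        refine ⟨(e x).2, h2, ?_⟩
        have h3 : g x = g a := h3
        rw [← h3]
        exact h1
    _ ≤ dimH s := hK.dimH_image_le
    _ ≤ dimH (univ : Set g'.ker) := dimH_mono (subset_univ _)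
    _ = finrank ℝ g'.ker := Real.dimH_univ_eq_finrank _

/-- corollary to the parametrized Sard theorem: let `X ⊆ ℝ^L`,
`Y ⊆ ℝ^M` be open and `f : X × Y → ℝ^N` be `C^r` with `r > max{0, L - N}` (which,
with truncated natural subtraction, reads `L - N < r`) and `L < N`. If `0` is a
regular value of `f` (the total derivative is surjective at every zero of `f` in
`X × Y`), then for Lebesgue-almost every `y ∈ Y` the set `{x ∈ X : f(x, y) = 0}`
is empty. -/
theorem parametrized_sard_empty (L M N : ℕ) (r : ℕ) (hr : L - N < r) (hLN : L < N)
    (X : Set (Fin L → ℝ)) (Y : Set (Fin M → ℝ)) (hX : IsOpen X) (hY : IsOpen Y)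
    (f : (Fin L → ℝ) → (Fin M → ℝ) → (Fin N → ℝ))
    (hf : ContDiffOn ℝ r (fun p : (Fin L → ℝ) × (Fin M → ℝ) => f p.1 p.2) (X ×ˢ Y))
    (hreg : ∀ p ∈ X ×ˢ Y, f p.1 p.2 = 0 →
      Surjective (fderiv ℝ (fun q : (Fin L → ℝ) × (Fin M → ℝ) => f q.1 q.2) p)) :
    ∀ᵐ y ∂(volume : Measure (Fin M → ℝ)), y ∈ Y →
      {x ∈ X | f x y = 0} = ∅ := by
  set g := fun p : (Fin L → ℝ) × (Fin M → ℝ) => f p.1 p.2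
  set Z : Set ((Fin L → ℝ) × (Fin M → ℝ)) := {p ∈ X ×ˢ Y | g p = 0}
  have hlocal : ∀ p ∈ Z, ∃ t ∈ 𝓝[Z] p, dimH t ≤ (M - 1 : ℕ) ∧ 0 < M := by
    rintro p ⟨hp, hp0⟩
    have hg : HasStrictFDerivAt g (fderiv ℝ g p) p :=
      (hf.contDiffAt ((hX.prod hY).mem_nhds hp)).hasStrictFDerivAt (by
        have : r ≠ 0 := by omega
        exact_mod_cast this)
    have hrange : (fderiv ℝ g p).range = ⊤ := LinearMap.range_eq_top.2 (hreg p hp hp0)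
    obtain ⟨U, hU, hdim⟩ := exists_nhds_dimH_level_le hg hrange
    -- Rank-nullity: the kernel has dimension `L + M - N`.
    have hrank : finrank ℝ (fderiv ℝ g p).range + finrank ℝ (fderiv ℝ g p).ker = L + M := by
      simpa using (fderiv ℝ g p).toLinearMap.finrank_range_add_finrank_ker
    rw [hrange, finrank_top, finrank_fin_fun] at hrank
    refine ⟨U ∩ Z, inter_mem (mem_nhdsWithin_of_mem_nhds hU) self_mem_nhdsWithin, ?_, by omega⟩
    refine (dimH_mono ?_).trans (hdim.trans ?_)
    · rintro x ⟨hxU, -, hx0⟩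
      exact ⟨hxU, hx0.trans hp0.symm⟩
    · exact_mod_cast (by omega : finrank ℝ (fderiv ℝ g p).ker ≤ M - 1)
  have hnull : volume (Prod.snd '' Z) = 0 := by
    rcases Z.eq_empty_or_nonempty with hZ | ⟨p, hp⟩
    · simp [hZ]
    · obtain ⟨-, -, -, hM⟩ := hlocal p hp
      have hdimZ : dimH Z ≤ (M - 1 : ℕ) := by
        by_contra! hlt
        obtain ⟨q, hq, hqt⟩ := exists_mem_nhdsWithin_lt_dimH_of_lt_dimH hlt
        obtain ⟨t, ht, hle, -⟩ := hlocal q hq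
        exact (hqt t ht).not_ge hle
      have hlt : dimH (Prod.snd '' Z) < ((M : NNReal) : ENNReal) := by
        refine ((LipschitzWith.prod_snd.dimH_image_le Z).trans hdimZ).trans_lt ?_
        exact_mod_cast (by omega : M - 1 < M)
      have h0 := hausdorffMeasure_of_dimH_lt hlt
      rw [← hausdorffMeasure_pi_real]
      simpa using h0
  filter_upwards [measure_eq_zero_iff_ae_notMem.1 hnull] with y hy hyY
  refine eq_empty_of_forall_notMem fun x hx => hy ?_
  exact ⟨(x, y), ⟨⟨hx.1, hyY⟩, hx.2⟩, rfl⟩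
end
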